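/- Let G be a finite simple graph and f : V(G) → {3,4}. Let W be a finite simple graph with a distinguished vertex u0 such that W is 4-choosable but W is not g-choosable, where g(u0) = 3 and g(w) = 4 for all vertices w ≠ u0 of W. Let G' be the simple graph obtained from G by adding, for each vertex v of G with f(v) = 3, a new disjoint copy W_v of W together with the edge joining v to the vertex u0 of W_v. Then G' is 4-choosable if and only if G is f-choosable. -/

import Mathlib

/-- The graph `G'` obtained from `G` by adding, for each vertex `v` of `G` with
`f v = m`, a new disjoint copy of `W` together with the edge joining `v` to the
vertex `u0` of that copy. -/
def glueGraph {V U : Type} (G : SimpleGraph V) (f : V → ℕ) (m : ℕ)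
    (W : SimpleGraph U) (u0 : U) :
    SimpleGraph (V ⊕ ({v : V // f v = m} × U)) :=
  SimpleGraph.fromRel (fun p q =>
    (∃ a b, G.Adj a b ∧ p = Sum.inl a ∧ q = Sum.inl b) ∨
    (∃ (v : {v : V // f v = m}) (w w' : U), W.Adj w w' ∧
      p = Sum.inr (v, w) ∧ q = Sum.inr (v, w')) ∨
    (∃ v : {v : V // f v = m}, p = Sum.inl v.1 ∧ q = Sum.inr (v, u0)))

/-! In the backward direction, color the copies `W_v` first; deleting the color of the root of
`W_v` from the list of `v` leaves enough colors to extend by a coloring of `G`. In the forward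
direction, put a new color `x v` both into the list of `v` and into the root list of an uncolorable
assignment on `W_v`. Every coloring of `W_v` must then use `x v` at the root, so `v` avoids `x v`
and keeps a color of its original list. Since `x v` may depend on `v`, it only has to avoid two
finite lists, and the graphs may be infinite. -/

open Function

theorem exists_subset_card_eq_notMem {α : Type*} {s : Finset α} {k : ℕ} (hs : k + 1 ≤ s.card)
    (a : α) : ∃ t ⊆ s, t.card = k ∧ a ∉ t := by
  classical
  obtain ⟨t, ht, hcard⟩ := Finset.exists_subset_card_eq
    ((Nat.le_sub_one_of_lt hs).trans (Finset.pred_card_le_card_erase (a := a)))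
  obtain ⟨hts, hat⟩ := Finset.subset_erase.1 ht
  exact ⟨t, hts, hcard, hat⟩

section ListColoring

variable {V C : Type*}

/-- `c` is a proper `S`-coloring of `G`. -/
def IsListColoring (G : SimpleGraph V) (S : V → Finset C) (c : V → C) : Prop :=
  (∀ v, c v ∈ S v) ∧ ∀ p q, G.Adj p q → c p ≠ c q

variable (C) in
/-- `G` is `f`-choosable with colors taken from `C`. The lists have size exactly `f v`. -/
def IsChoosable (G : SimpleGraph V) (f : V → ℕ) : Prop :=
  ∀ S : V → Finset C, (∀ v, (S v).card = f v) → ∃ c, IsListColoring G S c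

theorem not_isChoosable_iff {G : SimpleGraph V} {f : V → ℕ} :
    ¬ IsChoosable C G f ↔
      ∃ S : V → Finset C, (∀ v, (S v).card = f v) ∧ ∀ c, ¬ IsListColoring G S c := by
  simp only [IsChoosable, not_forall, not_exists, exists_prop]

theorem IsListColoring.eq_of_update_insert [DecidableEq V] [DecidableEq C] {G : SimpleGraph V}
    {S : V → Finset C} {c : V → C} {u : V} {x : C}
    (hc : IsListColoring G (update S u (insert x (S u))) c)
    (hS : ∀ c, ¬ IsListColoring G S c) : c u = x := by
  obtain ⟨hu, hne⟩ := (forall_update_iff S fun v s ↦ c v ∈ s).1 hc.1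
  by_contra hx
  refine hS c ⟨fun v ↦ ?_, hc.2⟩
  obtain rfl | hv := eq_or_ne v u
  · exact Finset.mem_of_mem_insert_of_ne hu hx
  · exact hne v hv

end ListColoring

section GlueGraph

variable {V U : Type} {C : Type*} {G : SimpleGraph V} {f : V → ℕ} {m : ℕ} {W : SimpleGraph U}
  {u0 : U}

theorem glueGraph_adj_inl_inl {a b : V} :
    (glueGraph G f m W u0).Adj (Sum.inl a) (Sum.inl b) ↔ G.Adj a b := by
  simpa [glueGraph, G.adj_comm b a] using G.ne_of_adj

theorem glueGraph_adj_inr_inr {p q : {v : V // f v = m} × U} :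
    (glueGraph G f m W u0).Adj (Sum.inr p) (Sum.inr q) ↔ p.1 = q.1 ∧ W.Adj p.2 q.2 := by
  obtain ⟨v, w⟩ := p
  obtain ⟨v', w'⟩ := q
  have := W.ne_of_adj (a := w) (b := w')
  simp only [glueGraph, SimpleGraph.fromRel_adj]
  grind [W.adj_comm w' w]

theorem glueGraph_adj_inl_inr {a : V} {p : {v : V // f v = m} × U} :
    (glueGraph G f m W u0).Adj (Sum.inl a) (Sum.inr p) ↔ a = p.1 ∧ p.2 = u0 := by
  obtain ⟨v, w⟩ := p
  simp only [glueGraph, SimpleGraph.fromRel_adj]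
  grind

theorem isListColoring_glueGraph_iff {S : V ⊕ ({v : V // f v = m} × U) → Finset C}
    {c : V ⊕ ({v : V // f v = m} × U) → C} :
    IsListColoring (glueGraph G f m W u0) S c ↔
      IsListColoring G (fun v ↦ S (Sum.inl v)) (fun v ↦ c (Sum.inl v)) ∧
      (∀ v, IsListColoring W (fun w ↦ S (Sum.inr (v, w))) (fun w ↦ c (Sum.inr (v, w)))) ∧
      ∀ v : {v : V // f v = m}, c (Sum.inl v) ≠ c (Sum.inr (v, u0)) := by
  constructor
  · rintro ⟨hmem, hne⟩
    exact ⟨⟨fun v ↦ hmem _, fun a b h ↦ hne _ _ (glueGraph_adj_inl_inl.2 h)⟩,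
      fun v ↦ ⟨fun w ↦ hmem _, fun w w' h ↦ hne _ _ (glueGraph_adj_inr_inr.2 ⟨rfl, h⟩)⟩,
      fun v ↦ hne _ _ (glueGraph_adj_inl_inr.2 ⟨rfl, rfl⟩)⟩
  · rintro ⟨hG, hW, hroot⟩
    refine ⟨Sum.forall.2 ⟨hG.1, fun p ↦ (hW p.1).1 p.2⟩, ?_⟩
    rintro (a | ⟨v, w⟩) (b | ⟨v', w'⟩) h
    · exact hG.2 a b (glueGraph_adj_inl_inl.1 h)
    · obtain ⟨rfl, rfl⟩ := glueGraph_adj_inl_inr.1 h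
      exact hroot v'
    · obtain ⟨rfl, rfl⟩ := glueGraph_adj_inl_inr.1 h.symm
      exact (hroot v).symm
    · obtain ⟨rfl, h⟩ := glueGraph_adj_inr_inr.1 h
      exact (hW v).2 w w' h

/-- The list sizes on `glueGraph G f m W u0` corresponding to the sizes `f` on `G` and `h` on `W`:
a vertex of `G` receives one extra color exactly when a copy of `W` is attached to it. -/
def glueSize (f : V → ℕ) (m : ℕ) (h : U → ℕ) : V ⊕ ({v : V // f v = m} × U) → ℕ :=
  Sum.elim (fun v ↦ if f v = m then f v + 1 else f v) (fun p ↦ h p.2)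

protected theorem IsChoosable.glueGraph {h : U → ℕ} (hG : IsChoosable C G f)
    (hW : IsChoosable C W h) :
    IsChoosable C (glueGraph G f m W u0) (glueSize f m h) := by
  classical
  intro S hS
  obtain ⟨hSG, hSW⟩ := Sum.forall.1 hS
  choose d hd using fun v : {v : V // f v = m} ↦
    hW (fun w ↦ S (Sum.inr (v, w))) fun w ↦ hSW (v, w)
  have exists_reduced_list : ∀ v, ∃ T ⊆ S (Sum.inl v), T.card = f v ∧
      ∀ hv : f v = m, d ⟨v, hv⟩ u0 ∉ T := by
    intro v
    have hcard : (S (Sum.inl v)).card = if f v = m then f v + 1 else f v := hSG v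
    split_ifs at hcard with hv
    · obtain ⟨T, hT, hTcard, hmem⟩ := exists_subset_card_eq_notMem hcard.ge (d ⟨v, hv⟩ u0)
      exact ⟨T, hT, hTcard, fun _ ↦ hmem⟩
    · exact ⟨_, subset_rfl, hcard, fun h ↦ absurd h hv⟩
  choose T hTS hTcard hTroot using exists_reduced_list
  obtain ⟨c, hc⟩ := hG T hTcard
  refine ⟨Sum.elim c fun p ↦ d p.1 p.2, isListColoring_glueGraph_iff.2
    ⟨⟨fun v ↦ hTS v (hc.1 v), hc.2⟩, hd,
      fun v (heq : c v = d v u0) ↦ hTroot v v.2 (heq ▸ hc.1 v)⟩⟩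

theorem IsChoosable.of_glueGraph [Infinite C] [DecidableEq U] {h : U → ℕ} {n : ℕ}
    (hn : h u0 = n + 1) (hcrit : ¬ IsChoosable C W (update h u0 n))
    (hglue : IsChoosable C (glueGraph G f m W u0) (glueSize f m h)) :
    IsChoosable C G f := by
  classical
  intro S hS
  obtain ⟨T, hT, hTbad⟩ := not_isChoosable_iff.1 hcrit
  obtain ⟨hTroot, hTne⟩ := (forall_update_iff h fun w k ↦ (T w).card = k).1 hT
  choose x hx using fun v ↦ Infinite.exists_notMem_finset (S v ∪ T u0)
  simp only [Finset.mem_union, not_or] at hx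
  let L : V ⊕ ({v : V // f v = m} × U) → Finset C :=
    Sum.elim (fun v ↦ if f v = m then insert (x v) (S v) else S v)
      fun p ↦ update T u0 (insert (x p.1) (T u0)) p.2
  have hL : ∀ z, (L z).card = glueSize f m h z := by
    rintro (v | ⟨v, w⟩)
    · by_cases hv : f v = m
      · simp [L, glueSize, hv, Finset.card_insert_of_notMem (hx v).1, hS]
      · simp [L, glueSize, hv, hS]
    · obtain rfl | hw := eq_or_ne w u0
      · simp [L, glueSize, Finset.card_insert_of_notMem (hx v).2, hTroot, hn]
      · simp [L, glueSize, hw, hTne]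
  obtain ⟨c, hc⟩ := hglue L hL
  obtain ⟨hcG, hcW, hcroot⟩ := isListColoring_glueGraph_iff.1 hc
  have root_eq (v : {v : V // f v = m}) : c (Sum.inr (v, u0)) = x v :=
    IsListColoring.eq_of_update_insert (c := fun w ↦ c (Sum.inr (v, w))) (hcW v) hTbad
  refine ⟨fun v ↦ c (Sum.inl v), fun v ↦ ?_, hcG.2⟩
  have hmem : c (Sum.inl v) ∈ if f v = m then insert (x v) (S v) else S v := hcG.1 v
  split_ifs at hmem with hv
  · exact Finset.mem_of_mem_insert_of_ne hmem (root_eq ⟨v, hv⟩ ▸ hcroot ⟨v, hv⟩)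
  · exact hmem

end GlueGraph

theorem glue_four_choosable_iff_general {V U : Type} {C : Type*} [Infinite C] [DecidableEq U]
    (G : SimpleGraph V) (f : V → ℕ) (m : ℕ) (W : SimpleGraph U) (u0 : U) (h : U → ℕ) (n : ℕ)
    (hn : h u0 = n + 1) (hW : IsChoosable C W h) (hcrit : ¬ IsChoosable C W (update h u0 n)) :
    IsChoosable C (glueGraph G f m W u0) (glueSize f m h) ↔ IsChoosable C G f :=
  ⟨.of_glueGraph hn hcrit, fun hG ↦ hG.glueGraph hW⟩

/-- The reduction in the proof of Theorem 1.11: if `W` is a 4-choice-critical gadget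
(4-choosable, but not colorable from some lists of size 4 with a list of size 3 at
`u0`), then the graph `G'` obtained from `G` by attaching a copy of `W` at every
vertex `v` with `f v = 3` is 4-choosable iff `G` is `f`-choosable. -/
theorem glue_four_choosable_iff {V U : Type} [Fintype V] [Fintype U]
    (G : SimpleGraph V) (f : V → ℕ) (hf : ∀ v, f v = 3 ∨ f v = 4)
    (W : SimpleGraph U) (u0 : U)
    (hW4 : ∀ S : U → Finset ℤ, (∀ w, (S w).card = 4) →
      ∃ c : U → ℤ, (∀ w, c w ∈ S w) ∧ ∀ p q, W.Adj p q → c p ≠ c q)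
    (hWg : ¬ ∀ S : U → Finset ℤ,
      ((S u0).card = 3 ∧ ∀ w, w ≠ u0 → (S w).card = 4) →
      ∃ c : U → ℤ, (∀ w, c w ∈ S w) ∧ ∀ p q, W.Adj p q → c p ≠ c q) :
    (∀ S : (V ⊕ ({v : V // f v = 3} × U)) → Finset ℤ, (∀ z, (S z).card = 4) →
      ∃ c : (V ⊕ ({v : V // f v = 3} × U)) → ℤ, (∀ z, c z ∈ S z) ∧
        ∀ p q, (glueGraph G f 3 W u0).Adj p q → c p ≠ c q) ↔
    (∀ S : V → Finset ℤ, (∀ v, (S v).card = f v) →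
      ∃ c : V → ℤ, (∀ v, c v ∈ S v) ∧ ∀ p q, G.Adj p q → c p ≠ c q) := by
  classical
  have hsize : glueSize f 3 (fun _ : U ↦ 4) = fun _ ↦ 4 := by
    ext (v | p)
    · rcases hf v with hv | hv <;> simp [glueSize, hv]
    · rfl
  have hcrit : ¬ IsChoosable ℤ W (update (fun _ ↦ 4) u0 3) := fun hW ↦
    hWg fun S hS ↦ hW S ((forall_update_iff _ fun w k ↦ (S w).card = k).2 hS)
  have key := glue_four_choosable_iff_general G f 3 W u0 (fun _ ↦ 4) 3 rfl hW4 hcrit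
  rwa [hsize] at key
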